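/- arXiv:2411.02172 — 2 statements merged into one kernel-verified Lean document; each statement's English description precedes it below -/
import Mathlib

section
/- Let G be a connected graph on n vertices. Every inclusion-maximal tubing of G contains exactly n − 1 tubes. -/
/-- A tube of a graph `G` is a nonempty proper subset of the vertices inducing a
connected subgraph. -/
def IsTube {V : Type*} [Fintype V] [DecidableEq V] (G : SimpleGraph V) (t : Finset V) : Prop :=
  t.Nonempty ∧ t ≠ Finset.univ ∧ (G.induce (t : Set V)).Connected

/-- Two tubes are compatible if they are nested or non-adjacent
(their union induces a disconnected subgraph). -/
def TubeCompat {V : Type*} [Fintype V] [DecidableEq V] (G : SimpleGraph V)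
    (t₁ t₂ : Finset V) : Prop :=
  t₁ ⊆ t₂ ∨ t₂ ⊆ t₁ ∨ ¬ (G.induce ((t₁ ∪ t₂ : Finset V) : Set V)).Connected

/-- A tubing is a set of pairwise compatible tubes. -/
def IsTubing {V : Type*} [Fintype V] [DecidableEq V] (G : SimpleGraph V)
    (T : Finset (Finset V)) : Prop :=
  (∀ t ∈ T, IsTube G t) ∧ (T : Set (Finset V)).Pairwise (TubeCompat G)

/-- An inclusion-maximal tubing. -/
def IsMaxTubing {V : Type*} [Fintype V] [DecidableEq V] (G : SimpleGraph V)
    (T : Finset (Finset V)) : Prop :=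
  IsTubing G T ∧ ∀ T', IsTubing G T' → T ⊆ T' → T' = T

/-!
Admit the whole vertex set, when it is connected, as a further tube: in every finite graph, a
maximal family of pairwise compatible connected vertex sets has exactly as many members as there
are vertices. Indeed, members that meet are nested, so each vertex is charged to the smallest
member containing it. Every member `U` is charged at least once: if `t` is a maximal member
strictly inside `U`, a vertex of `U \ t` adjacent to `t` lies in no member strictly inside `U`.
And `U` is charged at most once: if `x ≠ y` were both charged to `U`, the component of `y` in
`U \ {x}` could be added to the family.
-/

section Residue

variable {α : Type*} [DecidableEq α] {F : Finset (Finset α)} {s : Finset α} {x : α}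

/-- The elements of `s` that lie in no member of the family `F` strictly contained in `s`. If
members of `F` that meet are nested, then for `s ∈ F` these are the elements whose smallest
containing member is `s`. -/
def residue (F : Finset (Finset α)) (s : Finset α) : Finset α :=
  s \ (F.filter (· ⊂ s)).biUnion id

lemma mem_residue : x ∈ residue F s ↔ x ∈ s ∧ ∀ t ∈ F, t ⊂ s → x ∉ t := by
  simp [residue]

lemma residue_subset : residue F s ⊆ s :=
  Finset.sdiff_subset

lemma biUnion_residue (F : Finset (Finset α)) : F.biUnion (residue F) = F.biUnion id := by
  refine (Finset.biUnion_mono fun _ _ => residue_subset).antisymm fun x hx => ?_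
  obtain ⟨t, ht, hxt⟩ := Finset.mem_biUnion.1 hx
  obtain ⟨s, hs⟩ := (F.filter (x ∈ ·)).exists_minimal ⟨t, Finset.mem_filter.2 ⟨ht, hxt⟩⟩
  obtain ⟨hsF, hxs⟩ := Finset.mem_filter.1 hs.prop
  exact Finset.mem_biUnion.2 ⟨s, hsF, mem_residue.2
    ⟨hxs, fun u hu hus hxu => hs.not_lt (Finset.mem_filter.2 ⟨hu, hxu⟩) hus⟩⟩

lemma pairwiseDisjoint_residue
    (hF : (F : Set (Finset α)).Pairwise fun s t => s ⊆ t ∨ t ⊆ s ∨ Disjoint s t) :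
    (F : Set (Finset α)).PairwiseDisjoint (residue F) := by
  have disjoint_of_ssubset {s t : Finset α} (hs : s ∈ F) (hst : s ⊂ t) :
      Disjoint (residue F s) (residue F t) :=
    Finset.disjoint_left.2 fun _ hxs hxt => (mem_residue.1 hxt).2 s hs hst (residue_subset hxs)
  intro s hs t ht hne
  rcases hF hs ht hne with hst | hts | hdisj
  · exact disjoint_of_ssubset hs (hst.ssubset_of_ne hne)
  · exact (disjoint_of_ssubset ht (hts.ssubset_of_ne hne.symm)).symm
  · exact hdisj.mono residue_subset residue_subset

lemma sum_card_residue
    (hF : (F : Set (Finset α)).Pairwise fun s t => s ⊆ t ∨ t ⊆ s ∨ Disjoint s t) :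
    ∑ s ∈ F, (residue F s).card = (F.biUnion id).card := by
  rw [← Finset.card_biUnion (pairwiseDisjoint_residue hF), biUnion_residue]

end Residue

section Connected

variable {V : Type*} {G : SimpleGraph V}

lemma connected_induce_univ_iff [Fintype V] :
    (G.induce ((Finset.univ : Finset V) : Set V)).Connected ↔ G.Connected := by
  rw [Finset.coe_univ]
  exact (SimpleGraph.induceUnivIso G).connected_iff

lemma connected_induce_union_of_mem [DecidableEq V] {s t : Finset V} {x : V}
    (hs : (G.induce (s : Set V)).Connected) (ht : (G.induce (t : Set V)).Connected)
    (hxs : x ∈ s) (hxt : x ∈ t) :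
    (G.induce ((s ∪ t : Finset V) : Set V)).Connected := by
  rw [Finset.coe_union]
  exact SimpleGraph.induce_union_connected hs.preconnected ht.preconnected ⟨x, hxs, hxt⟩

lemma exists_adj_of_preconnected_induce {s t : Set V} (ht : (G.induce t).Preconnected)
    (hs : s.Nonempty) (hst : s ⊂ t) : ∃ a ∈ s, ∃ b ∈ t \ s, G.Adj a b := by
  obtain ⟨a, ha⟩ := hs
  obtain ⟨b, hb, hbs⟩ := Set.exists_of_ssubset hst
  obtain ⟨p⟩ := ht ⟨a, hst.subset ha⟩ ⟨b, hb⟩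
  obtain ⟨d, -, hfst, hsnd⟩ := p.exists_boundary_dart {v | (v : V) ∈ s} ha hbs
  exact ⟨d.fst, hfst, d.snd, ⟨d.snd.2, hsnd⟩, d.adj⟩

/-- `C` is the vertex set of a connected component of the subgraph of `G` induced by `S`, encoded
as a maximal connected subset of `S`. -/
def IsComponentIn (G : SimpleGraph V) (S C : Finset V) : Prop :=
  Maximal (fun C : Finset V => C ⊆ S ∧ (G.induce (C : Set V)).Connected) C

lemma exists_isComponentIn (G : SimpleGraph V) {S : Finset V} {x : V} (hx : x ∈ S) :
    ∃ C, IsComponentIn G S C ∧ x ∈ C := by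
  have hconn : (G.induce (({x} : Finset V) : Set V)).Connected := by
    rw [Finset.coe_singleton]
    exact ⟨SimpleGraph.Preconnected.of_subsingleton⟩
  have hfinite : {C : Finset V | C ⊆ S ∧ (G.induce (C : Set V)).Connected}.Finite :=
    S.powerset.finite_toSet.subset fun C hC => Finset.mem_powerset.2 hC.1
  obtain ⟨C, hxC, hC⟩ := hfinite.exists_le_maximal ⟨Finset.singleton_subset_iff.2 hx, hconn⟩
  exact ⟨C, hC, Finset.singleton_subset_iff.1 hxC⟩

end Connected

section NestedFamily

variable {V : Type*} [Fintype V] [DecidableEq V] {G : SimpleGraph V}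
  {F T : Finset (Finset V)} {s t U : Finset V} {x y : V}

@[refl]
lemma TubeCompat.refl (G : SimpleGraph V) (t : Finset V) : TubeCompat G t t :=
  Or.inl subset_rfl

lemma TubeCompat.symm (h : TubeCompat G s t) : TubeCompat G t s := by
  rcases h with hst | hts | hconn
  · exact Or.inr (Or.inl hst)
  · exact Or.inl hts
  · exact Or.inr (Or.inr (by rwa [Finset.union_comm]))

instance : Std.Symm (TubeCompat G) := ⟨fun _ _ => TubeCompat.symm⟩

lemma TubeCompat.subset_or_subset (h : TubeCompat G s t)
    (hconn : (G.induce ((s ∪ t : Finset V) : Set V)).Connected) : s ⊆ t ∨ t ⊆ s := by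
  simpa [TubeCompat, hconn] using h

/-- A family of pairwise compatible connected vertex sets: a tubing in which the whole vertex set
is allowed as a tube, that is, a nested set of the graphical building set of `G`. -/
def IsNestedFamily (G : SimpleGraph V) (F : Finset (Finset V)) : Prop :=
  (∀ t ∈ F, (G.induce (t : Set V)).Connected) ∧ (F : Set (Finset V)).Pairwise (TubeCompat G)

lemma IsNestedFamily.connected (hF : IsNestedFamily G F) (ht : t ∈ F) :
    (G.induce (t : Set V)).Connected :=
  hF.1 t ht

lemma IsNestedFamily.tubeCompat (hF : IsNestedFamily G F) (hs : s ∈ F) (ht : t ∈ F) :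
    TubeCompat G s t := by
  obtain rfl | hne := eq_or_ne s t
  · rfl
  · exact hF.2 hs ht hne

lemma IsNestedFamily.mono (hF : IsNestedFamily G F) (hTF : T ⊆ F) : IsNestedFamily G T :=
  ⟨fun t ht => hF.1 t (hTF ht), hF.2.mono (Finset.coe_subset.2 hTF)⟩

lemma IsNestedFamily.insert (hF : IsNestedFamily G F) (hs : (G.induce (s : Set V)).Connected)
    (hcompat : ∀ t ∈ F, TubeCompat G s t) : IsNestedFamily G (insert s F) := by
  refine ⟨(Finset.forall_mem_insert ..).2 ⟨hs, hF.1⟩, ?_⟩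
  rw [Finset.coe_insert]
  exact hF.2.insert_of_symm fun t ht _ => hcompat t ht

lemma IsNestedFamily.pairwise_subset_or_disjoint (hF : IsNestedFamily G F) :
    (F : Set (Finset V)).Pairwise fun s t => s ⊆ t ∨ t ⊆ s ∨ Disjoint s t := by
  intro s hs t ht _
  rw [← or_assoc, or_iff_not_imp_right, Finset.not_disjoint_iff]
  rintro ⟨x, hxs, hxt⟩
  exact (hF.tubeCompat hs ht).subset_or_subset
    (connected_induce_union_of_mem (hF.connected hs) (hF.connected ht) hxs hxt)

lemma IsNestedFamily.residue_nonempty (hF : IsNestedFamily G F)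
    (hU : (G.induce (U : Set V)).Connected) : (residue F U).Nonempty := by
  obtain hempty | hne := (F.filter (· ⊂ U)).eq_empty_or_nonempty
  · obtain ⟨x, hx⟩ := hU.nonempty
    exact ⟨x, by simpa [residue, hempty] using hx⟩
  obtain ⟨t, ht⟩ := (F.filter (· ⊂ U)).exists_maximal hne
  obtain ⟨htF, htU⟩ := Finset.mem_filter.1 ht.prop
  obtain ⟨a, hat, b, ⟨hbU, hbt⟩, hab⟩ := exists_adj_of_preconnected_induce hU.preconnected
    (Set.nonempty_coe_sort.1 (hF.connected htF).nonempty) (Finset.coe_ssubset.2 htU)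
  refine ⟨b, mem_residue.2 ⟨hbU, fun u hu huU hbu => hbt ?_⟩⟩
  have hconn : (G.induce ((t ∪ u : Finset V) : Set V)).Connected := by
    rw [Finset.coe_union]
    exact SimpleGraph.connected_induce_union (hF.connected htF).preconnected
      (hF.connected hu).preconnected hat hbu hab
  obtain htu | hut := (hF.tubeCompat htF hu).subset_or_subset hconn
  · exact ht.le_of_ge (Finset.mem_filter.2 ⟨hu, huU⟩) htu hbu
  · exact hut hbu

lemma IsComponentIn.mem_of_maximal {S C : Finset V} (hC : IsComponentIn G S C)
    (hF : Maximal (IsNestedFamily G) F)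
    (hS : ∀ t ∈ F, (G.induce ((C ∪ t : Finset V) : Set V)).Connected → C ⊆ t ∨ t ⊆ S) :
    C ∈ F := by
  have hcompat : ∀ t ∈ F, TubeCompat G C t := by
    intro t ht
    by_cases hconn : (G.induce ((C ∪ t : Finset V) : Set V)).Connected
    · refine (hS t ht hconn).imp_right fun htS => Or.inl ?_
      exact Finset.subset_union_right.trans
        (hC.le_of_ge ⟨Finset.union_subset hC.prop.1 htS, hconn⟩ Finset.subset_union_left)
    · exact Or.inr (Or.inr hconn)
  exact hF.le_of_ge (hF.prop.insert hC.prop.2 hcompat) (Finset.subset_insert C F)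
    (Finset.mem_insert_self C F)

lemma biUnion_eq_univ_of_maximal_isNestedFamily (hF : Maximal (IsNestedFamily G) F) :
    F.biUnion id = Finset.univ := by
  refine Finset.eq_univ_of_forall fun x => ?_
  obtain ⟨C, hC, hxC⟩ := exists_isComponentIn G (Finset.mem_univ x)
  exact Finset.mem_biUnion.2
    ⟨C, hC.mem_of_maximal hF fun t _ _ => Or.inr (Finset.subset_univ t), hxC⟩

lemma eq_of_mem_residue_of_maximal_isNestedFamily (hF : Maximal (IsNestedFamily G) F)
    (hU : U ∈ F) (hx : x ∈ residue F U) (hy : y ∈ residue F U) : x = y := by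
  by_contra hxy
  obtain ⟨hxU, hx_notMem⟩ := mem_residue.1 hx
  obtain ⟨hyU, hy_notMem⟩ := mem_residue.1 hy
  obtain ⟨C, hC, hyC⟩ := exists_isComponentIn G (Finset.mem_erase.2 ⟨Ne.symm hxy, hyU⟩)
  have hCU : C ⊂ U := hC.prop.1.trans_ssubset (Finset.erase_ssubset hxU)
  refine hy_notMem C (hC.mem_of_maximal hF fun t ht hCt => ?_) hCU hyC
  have hUt : (G.induce ((U ∪ t : Finset V) : Set V)).Connected := by
    have h := connected_induce_union_of_mem (hF.prop.connected hU) hCt hyU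
      (Finset.mem_union_left t hyC)
    rwa [← Finset.union_assoc, Finset.union_eq_left.2 hCU.subset] at h
  obtain hUt | htU := (hF.prop.tubeCompat hU ht).subset_or_subset hUt
  · exact Or.inl (hCU.subset.trans hUt)
  · obtain rfl | htU := htU.eq_or_ssubset
    · exact Or.inl hCU.subset
    · exact Or.inr (Finset.subset_erase.2 ⟨htU.subset, hx_notMem t ht htU⟩)

theorem card_eq_of_maximal_isNestedFamily (hF : Maximal (IsNestedFamily G) F) :
    F.card = Fintype.card V := by
  have hcard : ∀ U ∈ F, (residue F U).card = 1 := fun U hU =>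
    le_antisymm
      (Finset.card_le_one.2 fun _ hx _ hy =>
        eq_of_mem_residue_of_maximal_isNestedFamily hF hU hx hy)
      (hF.prop.residue_nonempty (hF.prop.connected hU)).card_pos
  calc F.card = ∑ U ∈ F, (residue F U).card := by
        rw [Finset.sum_congr rfl hcard, Finset.card_eq_sum_ones]
    _ = (F.biUnion id).card := sum_card_residue hF.prop.pairwise_subset_or_disjoint
    _ = Fintype.card V := by
        rw [biUnion_eq_univ_of_maximal_isNestedFamily hF, Finset.card_univ]

lemma isTubing_iff : IsTubing G T ↔ IsNestedFamily G T ∧ Finset.univ ∉ T := by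
  constructor
  · exact fun hT => ⟨⟨fun t ht => (hT.1 t ht).2.2, hT.2⟩, fun h => (hT.1 _ h).2.1 rfl⟩
  · exact fun ⟨hT, huniv⟩ => ⟨fun t ht => ⟨Set.nonempty_coe_sort.1 (hT.connected ht).nonempty,
      ne_of_mem_of_not_mem ht huniv, hT.connected ht⟩, hT.2⟩

lemma IsMaxTubing.maximal_insert_univ (hT : IsMaxTubing G T) (hG : G.Connected) :
    Maximal (IsNestedFamily G) (insert Finset.univ T) := by
  have hins : IsNestedFamily G (insert Finset.univ T) :=
    (isTubing_iff.1 hT.1).1.insert (connected_induce_univ_iff.2 hG)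
      fun t _ => Or.inr (Or.inl (Finset.subset_univ t))
  refine ⟨hins, fun F hF hTF => ?_⟩
  have htubing : IsTubing G (F.erase Finset.univ) :=
    isTubing_iff.2 ⟨hF.mono (Finset.erase_subset _ F), Finset.notMem_erase _ F⟩
  have hT_erase : T ⊆ F.erase Finset.univ :=
    Finset.subset_erase.2 ⟨(Finset.subset_insert _ T).trans hTF, (isTubing_iff.1 hT.1).2⟩
  exact Finset.subset_insert_iff.2 (hT.2 _ htubing hT_erase).subset

lemma IsMaxTubing.maximal_of_not_connected (hT : IsMaxTubing G T) (hG : ¬ G.Connected) :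
    Maximal (IsNestedFamily G) T := by
  refine ⟨(isTubing_iff.1 hT.1).1, fun F hF hTF => ?_⟩
  have huniv : Finset.univ ∉ F := fun h => hG (connected_induce_univ_iff.1 (hF.connected h))
  exact (hT.2 F (isTubing_iff.2 ⟨hF, huniv⟩) hTF).subset

theorem maxTubing_card_general [Decidable G.Connected] (hT : IsMaxTubing G T) :
    T.card + (if G.Connected then 1 else 0) = Fintype.card V := by
  split_ifs with hG
  · rw [← Finset.card_insert_of_notMem (isTubing_iff.1 hT.1).2]
    exact card_eq_of_maximal_isNestedFamily (hT.maximal_insert_univ hG)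
  · exact card_eq_of_maximal_isNestedFamily (hT.maximal_of_not_connected hG)

end NestedFamily

/-- Every inclusion-maximal tubing of a connected graph on `n` vertices has exactly
`n - 1` tubes. -/
theorem maxTubing_card {V : Type*} [Fintype V] [DecidableEq V] (G : SimpleGraph V)
    (hG : G.Connected) (T : Finset (Finset V)) (hT : IsMaxTubing G T) :
    T.card = Fintype.card V - 1 := by
  classical
  exact Nat.eq_sub_of_add_eq (by simpa [hG] using maxTubing_card_general hT)
end

section
/- For every n ≥ 2, there exists a sequence of maximal tubings of the star S_n (center c, leaves l_1,...,l_{n−1}), with consecutive tubings differing by exchanging exactly one tube, such that every tube of S_n appears in the tubings of exactly one nonempty contiguous interval of the sequence. -/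
/-- The star `S_n` on `n` vertices: vertex `0` is the center, adjacent to all leaves. -/
def starGraph (n : ℕ) : SimpleGraph (Fin n) :=
  SimpleGraph.fromRel fun a _ => (a : ℕ) = 0

/-!
Every linear order on the vertices of a graph yields a maximal tubing: the components of its proper
lower sets. Exchanging two consecutive vertices of the order replaces at most one tube.

For the star, a leaf is a tube of an order iff it precedes the center, and a set containing the
center is a tube iff it is an initial segment. It therefore suffices to find a path of adjacent
transpositions along which every set of letters is an initial segment on an interval of times. Such
a path on `k` letters gives one on `k + 1` letters: traverse it with the new letter last, move the
new letter step by step to the front, and traverse the old path backwards. A set without the new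
letter is an initial segment only up to some time of the second stage, a set with it only from some
time of the second stage on, and on either part the old path is traversed monotonically.

The path of the stellohedron consists of the last two stages of this path, with the center of the
star as the new letter; during the first stage, in which the center is last, the tubing is constant.
-/

section SublevelTubing

variable {V α : Type*} {G : SimpleGraph V}

theorem exists_adj_of_connected_induce {s u : Set V} (hs : (G.induce s).Connected)
    (hsu : (s ∩ u).Nonempty) (h : ¬s ⊆ u) : ∃ y ∈ s ∩ u, ∃ z ∈ s \ u, G.Adj y z := by
  obtain ⟨x, hxs, hxu⟩ := hsu
  obtain ⟨w, hws, hwu⟩ := Set.not_subset.1 h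
  obtain ⟨p⟩ := hs.preconnected ⟨x, hxs⟩ ⟨w, hws⟩
  obtain ⟨d, -, hfst, hsnd⟩ := p.exists_boundary_dart (Subtype.val ⁻¹' u) hxu hwu
  exact ⟨d.fst, ⟨d.fst.2, hfst⟩, d.snd, ⟨d.snd.2, hsnd⟩, d.adj⟩

variable [Fintype V] [DecidableEq V]

theorem IsMaxTubing.sdiff_nonempty {T T' : Finset (Finset V)} (hT : IsMaxTubing G T)
    (hT' : IsMaxTubing G T') (hne : T ≠ T') : (T \ T').Nonempty :=
  Finset.sdiff_nonempty.2 fun hsub => hne (hT.2 T' hT'.1 hsub).symm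

section LT

variable [LT α]

open Classical in
/-- The tubing of `G` given by a ranking `r` of its vertices: the proper components of the sublevel
sets of `r`, encoded as the tubes whose outer neighbours all rank above every vertex of the tube. -/
noncomputable def sublevelTubing (G : SimpleGraph V) (r : V → α) : Finset (Finset V) :=
  {t | IsTube G t ∧ ∀ x ∈ t, ∀ y ∈ t, ∀ z ∉ t, G.Adj y z → r x < r z}

theorem mem_sublevelTubing {r : V → α} {t : Finset V} :
    t ∈ sublevelTubing G r ↔
      IsTube G t ∧ ∀ x ∈ t, ∀ y ∈ t, ∀ z ∉ t, G.Adj y z → r x < r z := by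
  simp [sublevelTubing]

end LT

variable [LinearOrder α] {r : V → α}

theorem subset_of_mem_sublevelTubing {t : Finset V} {s : Set V} {a : V}
    (ht : t ∈ sublevelTubing G r) (hs : (G.induce s).Connected) (hat : a ∈ t) (has : a ∈ s)
    (hmax : ∀ x ∈ s, r x ≤ r a) : s ⊆ t := by
  by_contra hst
  obtain ⟨y, hy, z, hz, hyz⟩ := exists_adj_of_connected_induce hs ⟨a, has, hat⟩ hst
  exact (hmax z hz.1).not_gt ((mem_sublevelTubing.1 ht).2 a hat y hy.2 z hz.2 hyz)

theorem isTubing_sublevelTubing (G : SimpleGraph V) (r : V → α) :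
    IsTubing G (sublevelTubing G r) := by
  refine ⟨fun t ht => (mem_sublevelTubing.1 ht).1, fun t ht u hu _ => ?_⟩
  by_cases hconn : (G.induce ((t ∪ u : Finset V) : Set V)).Connected
  · have hne : (t ∪ u).Nonempty := (mem_sublevelTubing.1 ht).1.1.mono Finset.subset_union_left
    obtain ⟨a, ha, hmax⟩ := (t ∪ u).exists_max_image r hne
    rcases Finset.mem_union.1 ha with hat | hau
    · exact .inr (.inl (Finset.subset_union_right.trans
        (subset_of_mem_sublevelTubing ht hconn hat ha hmax)))
    · exact .inl (Finset.subset_union_left.trans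
        (subset_of_mem_sublevelTubing hu hconn hau ha hmax))
  · exact .inr (.inr hconn)

theorem exists_mem_sublevelTubing {v w : V} (hvw : r v < r w) :
    ∃ t ∈ sublevelTubing G r, v ∈ t ∧ ∀ x ∈ t, r x ≤ r v := by
  classical
  let C : Finset (Finset V) :=
    {t | v ∈ t ∧ (∀ x ∈ t, r x ≤ r v) ∧ (G.induce (t : Set V)).Connected}
  have hC : C.Nonempty := ⟨{v}, by simp [C, SimpleGraph.Connected.of_subsingleton]⟩
  obtain ⟨t, ht⟩ := C.exists_maximal hC
  obtain ⟨hvt, hle, hconn⟩ := (Finset.mem_filter.1 ht.prop).2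
  refine ⟨t, mem_sublevelTubing.2 ⟨⟨⟨v, hvt⟩, ?_, hconn⟩, fun x hx y hy z hz hyz => ?_⟩, hvt, hle⟩
  · rintro rfl
    exact (hle w (Finset.mem_univ w)).not_gt hvw
  · refine (hle x hx).trans_lt (lt_of_not_ge fun hzv => hz ?_)
    have hinsert : insert z t ∈ C := by
      refine Finset.mem_filter.2 ⟨Finset.mem_univ _, Finset.mem_insert_of_mem hvt, ?_, ?_⟩
      · simpa [hzv] using hle
      · rw [Finset.coe_insert, Set.insert_eq]
        exact SimpleGraph.connected_induce_union .of_subsingleton hconn.preconnected rfl hy hyz.symm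
    exact ht.le_of_ge hinsert (Finset.subset_insert z t) (Finset.mem_insert_self z t)

theorem isMaxTubing_sublevelTubing (G : SimpleGraph V) (hr : r.Injective) :
    IsMaxTubing G (sublevelTubing G r) := by
  refine ⟨isTubing_sublevelTubing G r, fun T hT hsub => hsub.antisymm' fun u hu => ?_⟩
  refine mem_sublevelTubing.2 ⟨hT.1 u hu, fun x hx y hy z hz hyz => ?_⟩
  by_contra hlt
  have hzx : r z < r x := (not_lt.1 hlt).lt_of_ne (hr.ne (by rintro rfl; exact hz hx))
  obtain ⟨t, ht, hzt, hmax⟩ := exists_mem_sublevelTubing (G := G) hzx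
  have hxt : x ∉ t := fun hxt => (hmax x hxt).not_gt hzx
  rcases hT.2 hu (hsub ht) (by rintro rfl; exact hz hzt) with hut | htu | hdisconn
  · exact hxt (hut hx)
  · exact hz (htu hzt)
  · refine hdisconn ?_
    rw [Finset.coe_union]
    exact SimpleGraph.connected_induce_union (hT.1 u hu).2.2.preconnected
      (hT.1 t (hsub ht)).2.2.preconnected hy hzt hyz

variable {i j : α}

theorem swap_lt_swap_of_covBy (hij : i ⋖ j) {a b : α} (hab : a < b) (h : a ≠ i ∨ b ≠ j) :
    Equiv.swap i j a < Equiv.swap i j b := by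
  have hlt := hij.lt
  have hle : a < j → a ≤ i := hij.le_of_lt
  have hge : i < b → j ≤ b := hij.ge_of_gt
  grind

theorem card_sublevelTubing_sdiff_swap_le_one (G : SimpleGraph V) (hr : r.Injective)
    (hij : i ⋖ j) :
    (sublevelTubing G r \ sublevelTubing G (Equiv.swap i j ∘ r)).card ≤ 1 := by
  have exists_top {t : Finset V} (ht : t ∈ sublevelTubing G r)
      (ht' : t ∉ sublevelTubing G (Equiv.swap i j ∘ r)) : ∃ a ∈ t, r a = i ∧ ∀ x ∈ t, r x ≤ i := by
    obtain ⟨htube, hlt⟩ := mem_sublevelTubing.1 ht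
    simp only [mem_sublevelTubing, htube, true_and, not_forall] at ht'
    obtain ⟨a, hat, y, hyt, z, hzt, hyz, hswap⟩ := ht'
    have h : r a = i ∧ r z = j := by
      by_contra h
      exact hswap (swap_lt_swap_of_covBy hij (hlt a hat y hyt z hzt hyz) (not_and_or.1 h))
    exact ⟨a, hat, h.1, fun x hx => hij.le_of_lt (h.2 ▸ hlt x hx y hyt z hzt hyz)⟩
  refine Finset.card_le_one.2 fun t ht u hu => ?_
  rw [Finset.mem_sdiff] at ht hu
  obtain ⟨a, hat, rfl, htop⟩ := exists_top ht.1 ht.2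
  obtain ⟨b, hbu, hba, hutop⟩ := exists_top hu.1 hu.2
  obtain rfl := hr hba
  exact Finset.Subset.antisymm
    (subset_of_mem_sublevelTubing hu.1 (mem_sublevelTubing.1 ht.1).1.2.2 hbu hat htop)
    (subset_of_mem_sublevelTubing ht.1 (mem_sublevelTubing.1 hu.1).1.2.2 hat hbu hutop)

theorem card_sublevelTubing_sdiff_swap (hr : r.Injective) (hij : i ⋖ j)
    (hne : sublevelTubing G r ≠ sublevelTubing G (Equiv.swap i j ∘ r)) :
    (sublevelTubing G r \ sublevelTubing G (Equiv.swap i j ∘ r)).card = 1 ∧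
      (sublevelTubing G (Equiv.swap i j ∘ r) \ sublevelTubing G r).card = 1 := by
  set r' := Equiv.swap i j ∘ r
  have hr' : r'.Injective := (Equiv.swap i j).injective.comp hr
  have hT := isMaxTubing_sublevelTubing G hr
  have hT' := isMaxTubing_sublevelTubing G hr'
  have hle := card_sublevelTubing_sdiff_swap_le_one G hr hij
  have hle' := card_sublevelTubing_sdiff_swap_le_one G hr' hij
  have hinvol : Equiv.swap i j ∘ r' = r := by ext; simp [r']
  rw [hinvol] at hle'
  exact ⟨hle.antisymm (hT.sdiff_nonempty hT' hne).card_pos,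
    hle'.antisymm (hT'.sdiff_nonempty hT hne.symm).card_pos⟩

theorem sublevelTubing_ne_swap {a b c : V} (hij : i < j) (ha : r a = i) (hb : r b = j)
    (hc : r c ≤ i) (hac : c = a ∨ G.Adj a c) (hcb : G.Adj c b) :
    sublevelTubing G r ≠ sublevelTubing G (Equiv.swap i j ∘ r) := fun heq => by
  subst ha hb
  obtain ⟨t, ht, hat, hmax⟩ := exists_mem_sublevelTubing (G := G) hij
  have hbt : b ∉ t := fun hbt => (hmax b hbt).not_gt hij
  have hct : c ∈ t := by
    rcases hac with rfl | hac
    · exact hat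
    · by_contra hct
      exact hc.not_gt ((mem_sublevelTubing.1 ht).2 a hat a hat c hct hac)
  have hswap := (mem_sublevelTubing.1 (heq ▸ ht)).2 a hat c hct b hbt hcb
  simp only [Function.comp_apply, Equiv.swap_apply_left, Equiv.swap_apply_right] at hswap
  exact hij.not_gt hswap

end SublevelTubing

theorem exists_Icc_of_ordConnected {s : Set ℕ} (hs : s.OrdConnected) {m : ℕ}
    (hne : ∃ t < m, t ∈ s) : ∃ a b, a ≤ b ∧ b < m ∧ ∀ t < m, t ∈ s ↔ a ≤ t ∧ t ≤ b := by
  classical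
  obtain ⟨t, htm, hts⟩ := hne
  have hfin : ({t ∈ Finset.range m | t ∈ s} : Finset ℕ).Nonempty := ⟨t, by simp [htm, hts]⟩
  have hmin := Finset.mem_filter.1 (Finset.min'_mem _ hfin)
  have hmax := Finset.mem_filter.1 (Finset.max'_mem _ hfin)
  refine ⟨_, _, Finset.min'_le_max' _ hfin, Finset.mem_range.1 hmax.1, fun u hu => ⟨fun hus => ?_,
    fun hmem => hs.out hmin.2 hmax.2 hmem⟩⟩
  have hu' : u ∈ ({t ∈ Finset.range m | t ∈ s} : Finset ℕ) := by simp [hu, hus]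
  exact ⟨Finset.min'_le _ _ hu', Finset.le_max' _ _ hu'⟩

section InitialSegments

/-- `S` consists of the first `#S` letters of the arrangement `e`, where `e x` is the position of
the letter `x`. -/
def IsInitialSegment {β : Type*} {k : ℕ} (e : β ≃ Fin k) (S : Finset β) : Prop :=
  ∀ x, x ∈ S ↔ (e x : ℕ) < S.card

theorem isInitialSegment_iff_forall_lt {β : Type*} {k : ℕ} {e : β ≃ Fin k} {S : Finset β} :
    IsInitialSegment e S ↔ ∀ x ∈ S, ∀ z ∉ S, e x < e z := by
  refine ⟨fun h x hx z hz => ?_, fun h x => ⟨fun hx => ?_, fun hx => ?_⟩⟩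
  · exact ((h x).1 hx).trans_le (not_lt.1 ((h z).not.1 hz))
  · have hsub : Finset.Iic (e x) ⊆ S.map e.toEmbedding := fun p hp => by
      rw [Finset.mem_map_equiv]
      by_contra hpS
      exact (h x hx _ hpS).not_ge (by simpa using hp)
    simpa using Finset.card_le_card hsub
  · by_contra hxS
    have hsub : S.map e.toEmbedding ⊆ Finset.Iio (e x) := fun p hp => by
      rw [Finset.mem_map_equiv] at hp
      simpa using h _ hp x hxS
    exact (Finset.card_le_card hsub).not_gt (by simpa using hx)

theorem isInitialSegment_empty {β : Type*} {k : ℕ} (e : β ≃ Fin k) : IsInitialSegment e ∅ :=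
  isInitialSegment_iff_forall_lt.2 (by simp)

theorem isInitialSegment_univ {β : Type*} [Fintype β] {k : ℕ} (e : β ≃ Fin k) :
    IsInitialSegment e Finset.univ :=
  isInitialSegment_iff_forall_lt.2 (by simp)

/-- The arrangement of `k + 1` letters obtained from the arrangement `σ` of the letters `x.succ` by
inserting the new letter `0` at position `p`. -/
def permCons {k : ℕ} (p : Fin (k + 1)) (σ : Equiv.Perm (Fin k)) : Equiv.Perm (Fin (k + 1)) :=
  (finSuccEquiv k).trans ((Equiv.optionCongr σ).trans (finSuccEquiv' p).symm)

variable {k : ℕ} {p q : Fin (k + 1)} {σ : Equiv.Perm (Fin k)} {S : Finset (Fin (k + 1))}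

@[simp]
theorem permCons_zero (p : Fin (k + 1)) (σ : Equiv.Perm (Fin k)) : permCons p σ 0 = p := by
  simp [permCons]

@[simp]
theorem permCons_succ (p : Fin (k + 1)) (σ : Equiv.Perm (Fin k)) (x : Fin k) :
    permCons p σ x.succ = p.succAbove (σ x) := by
  simp [permCons]

theorem permCons_swap_mul (p : Fin (k + 1)) (σ : Equiv.Perm (Fin k)) (i j : Fin k) :
    permCons p (Equiv.swap i j * σ) =
      Equiv.swap (p.succAbove i) (p.succAbove j) * permCons p σ := by
  ext x
  cases x using Fin.cases with
  | zero => simp [Equiv.swap_apply_of_ne_of_ne]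
  | succ x => simp [Fin.succAbove_right_injective.swap_apply]

theorem permCons_eq_swap_mul (hqp : q ⋖ p) (σ : Equiv.Perm (Fin k)) :
    permCons q σ = Equiv.swap q p * permCons p σ := by
  have hqp' : (q : ℕ) + 1 = p := by simpa using hqp
  ext x
  cases x using Fin.cases with
  | zero => simp
  | succ x =>
    simp only [permCons_succ, Equiv.Perm.coe_mul, Function.comp_apply, Equiv.swap_apply_def,
      Fin.succAbove, Fin.lt_def, Fin.ext_iff]
    grind

theorem card_eq_filter_succ_mem (h0 : 0 ∉ S) :
    S.card = (Finset.univ.filter fun x : Fin k => x.succ ∈ S).card := by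
  simpa [h0] using Fin.card_filter_univ_succ (· ∈ S)

theorem card_eq_filter_succ_mem_add_one (h0 : 0 ∈ S) :
    S.card = (Finset.univ.filter fun x : Fin k => x.succ ∈ S).card + 1 := by
  simpa [h0] using Fin.card_filter_univ_succ (· ∈ S)

theorem isInitialSegment_permCons_of_zero_notMem (h0 : 0 ∉ S) :
    IsInitialSegment (permCons p σ) S ↔
      IsInitialSegment σ ({x | x.succ ∈ S} : Finset (Fin k)) ∧ S.card ≤ p := by
  simp only [IsInitialSegment, Fin.forall_fin_succ, permCons_zero, permCons_succ, h0, false_iff,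
    not_lt, Finset.mem_filter, Finset.mem_univ, true_and, ← card_eq_filter_succ_mem h0]
  rw [and_comm]
  refine and_congr_left fun hp => forall_congr' fun x => ?_
  simp only [Fin.succAbove, Fin.lt_def]
  grind

theorem isInitialSegment_permCons_of_zero_mem (h0 : 0 ∈ S) :
    IsInitialSegment (permCons p σ) S ↔
      IsInitialSegment σ ({x | x.succ ∈ S} : Finset (Fin k)) ∧ (p : ℕ) < S.card := by
  simp only [IsInitialSegment, Fin.forall_fin_succ, permCons_zero, permCons_succ, h0, true_iff,
    Finset.mem_filter, Finset.mem_univ, true_and]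
  rw [and_comm]
  refine and_congr_left fun hp => forall_congr' fun x => ?_
  have := card_eq_filter_succ_mem_add_one h0
  simp only [Fin.succAbove, Fin.lt_def]
  grind

end InitialSegments

section PermPath

/-- The number of adjacent transpositions in `permPath k`. -/
def permPathLength : ℕ → ℕ
  | 0 => 0
  | k + 1 => 2 * permPathLength k + k

/-- The path of arrangements of `k` letters: `permPath k t x` is the position of the letter `x` at
time `t ≤ permPathLength k`. In `permPath (k + 1)`, with `N = permPathLength k`, the new letter `0`
stays last up to time `N`, reaches the front at time `N + k` and stays there, while the other
letters follow `permPath k` forwards up to time `N`, rest, and return from time `N + k` on. -/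
def permPath : (k : ℕ) → ℕ → Equiv.Perm (Fin k)
  | 0, _ => 1
  | k + 1, t =>
    let N := permPathLength k
    permCons ⟨k - (t - N), by omega⟩ (permPath k (min (min t N) (2 * N + k - t)))

variable {k : ℕ}

theorem permPath_succ_of_le {t : ℕ} (ht : t ≤ permPathLength k) :
    permPath (k + 1) t = permCons (Fin.last k) (permPath k t) := by
  rw [permPath]
  congr 2 <;> grind

theorem permPath_succ_length_add {m : ℕ} (hm : m ≤ k) :
    permPath (k + 1) (permPathLength k + m) =
      permCons ⟨k - m, by omega⟩ (permPath k (permPathLength k)) := by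
  rw [permPath]
  congr 2 <;> grind

theorem permPath_succ_length_add_add (m : ℕ) :
    permPath (k + 1) (permPathLength k + k + m) =
      permCons 0 (permPath k (permPathLength k - m)) := by
  rw [permPath]
  congr 2
  · simp
    omega
  · omega

theorem permPath_succ_zero_val (k t : ℕ) :
    (permPath (k + 1) t 0 : ℕ) = k - (t - permPathLength k) := by
  simp [permPath]

theorem exists_covBy_permPath_succ_of_length_le {t : ℕ} (hN : permPathLength k ≤ t)
    (ht : t < permPathLength k + k) :
    ∃ j, j ⋖ permPath (k + 1) t 0 ∧
      permPath (k + 1) (t + 1) = Equiv.swap j (permPath (k + 1) t 0) * permPath (k + 1) t := by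
  obtain ⟨m, rfl⟩ := Nat.exists_eq_add_of_le hN
  rw [add_assoc, permPath_succ_length_add (by omega), permPath_succ_length_add (by omega),
    permCons_zero]
  have hcov : (⟨k - (m + 1), by omega⟩ : Fin (k + 1)) ⋖ ⟨k - m, by omega⟩ := by
    simp
    omega
  exact ⟨_, hcov, permCons_eq_swap_mul hcov _⟩

theorem exists_covBy_permPath_add_one {t : ℕ} (ht : t < permPathLength k) :
    ∃ i j, i ⋖ j ∧ permPath k (t + 1) = Equiv.swap i j * permPath k t := by
  induction k generalizing t with
  | zero => simp [permPathLength] at ht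
  | succ k ih =>
    rcases lt_or_ge t (permPathLength k) with hN | hN
    · obtain ⟨i, j, hij, hswap⟩ := ih hN
      refine ⟨i.castSucc, j.castSucc, by simpa using hij, ?_⟩
      rw [permPath_succ_of_le hN, permPath_succ_of_le hN.le, hswap, permCons_swap_mul,
        Fin.succAbove_last]
    rcases lt_or_ge t (permPathLength k + k) with hk | hk
    · obtain ⟨j, hcov, hswap⟩ := exists_covBy_permPath_succ_of_length_le hN hk
      exact ⟨j, _, hcov, hswap⟩
    · obtain ⟨m, rfl⟩ := Nat.exists_eq_add_of_le hk
      rw [permPathLength] at ht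
      obtain ⟨i, j, hij, hswap⟩ := ih (t := permPathLength k - (m + 1)) (by omega)
      refine ⟨i.succ, j.succ, by simpa using hij, ?_⟩
      rw [show permPathLength k - (m + 1) + 1 = permPathLength k - m by omega] at hswap
      rw [add_assoc _ m, permPath_succ_length_add_add, permPath_succ_length_add_add, hswap,
        permCons_swap_mul, Fin.succAbove_zero, Equiv.swap_mul_self_mul]

theorem isInitialSegment_permPath_succ_of_zero_notMem {S : Finset (Fin (k + 1))} {t : ℕ}
    (h0 : 0 ∉ S) (hne : S.Nonempty) :
    IsInitialSegment (permPath (k + 1) t) S ↔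
      IsInitialSegment (permPath k (min t (permPathLength k)))
        ({x | x.succ ∈ S} : Finset (Fin k)) ∧ t + S.card ≤ permPathLength k + k := by
  have hpos : 0 < S.card := hne.card_pos
  have hle : S.card ≤ k := by simpa [Nat.lt_succ_iff] using Finset.card_lt_univ_of_notMem h0
  rw [permPath, isInitialSegment_permCons_of_zero_notMem h0]
  have hiff : S.card ≤ k - (t - permPathLength k) ↔ t + S.card ≤ permPathLength k + k := by omega
  rw [hiff]
  refine and_congr_left fun ht => ?_
  rw [min_eq_left (by omega)]

theorem isInitialSegment_permPath_succ_of_zero_mem {S : Finset (Fin (k + 1))} {t : ℕ}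
    (h0 : 0 ∈ S) (huniv : S ≠ Finset.univ) :
    IsInitialSegment (permPath (k + 1) t) S ↔
      IsInitialSegment (permPath k (min (permPathLength k) (2 * permPathLength k + k - t)))
        ({x | x.succ ∈ S} : Finset (Fin k)) ∧ permPathLength k + k < t + S.card := by
  have hpos : 0 < S.card := Finset.card_pos.2 ⟨0, h0⟩
  have hle : S.card ≤ k := by simpa [Nat.lt_succ_iff] using S.card_lt_iff_ne_univ.2 huniv
  rw [permPath, isInitialSegment_permCons_of_zero_mem h0]
  have hiff : k - (t - permPathLength k) < S.card ↔ permPathLength k + k < t + S.card := by omega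
  rw [hiff]
  refine and_congr_left fun ht => ?_
  rw [min_eq_right (a := t) (by omega)]

theorem ordConnected_setOf_isInitialSegment_permPath (S : Finset (Fin k)) :
    {t | IsInitialSegment (permPath k t) S}.OrdConnected := by
  induction k with
  | zero => simpa [S.eq_empty_of_isEmpty, isInitialSegment_empty] using Set.ordConnected_univ
  | succ k ih =>
    rcases S.eq_empty_or_nonempty with rfl | hne
    · simpa [isInitialSegment_empty] using Set.ordConnected_univ
    by_cases huniv : S = Finset.univ
    · simpa [huniv, isInitialSegment_univ] using Set.ordConnected_univ
    by_cases h0 : 0 ∈ S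
    · simp only [isInitialSegment_permPath_succ_of_zero_mem h0 huniv]
      exact ⟨fun t₁ h₁ t₂ h₂ t ⟨h₁t, ht₂⟩ =>
        ⟨(ih _).out h₂.1 h₁.1 ⟨by omega, by omega⟩, by grind⟩⟩
    · simp only [isInitialSegment_permPath_succ_of_zero_notMem h0 hne]
      exact ⟨fun t₁ h₁ t₂ h₂ t ⟨h₁t, ht₂⟩ =>
        ⟨(ih _).out h₁.1 h₂.1 ⟨by omega, by omega⟩, by grind⟩⟩

theorem exists_isInitialSegment_permPath (S : Finset (Fin k)) :
    ∃ t ≤ permPathLength k, IsInitialSegment (permPath k t) S := by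
  induction k with
  | zero => exact ⟨0, le_rfl, fun x => x.elim0⟩
  | succ k ih =>
    obtain ⟨t, ht, hS⟩ := ih {x | x.succ ∈ S}
    rw [permPathLength]
    by_cases h0 : 0 ∈ S
    · refine ⟨permPathLength k + k + (permPathLength k - t), by omega, ?_⟩
      rw [permPath_succ_length_add_add, isInitialSegment_permCons_of_zero_mem h0,
        Nat.sub_sub_self ht]
      exact ⟨hS, Finset.card_pos.2 ⟨0, h0⟩⟩
    · refine ⟨t, by omega, ?_⟩
      rw [permPath_succ_of_le ht, isInitialSegment_permCons_of_zero_notMem h0]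
      exact ⟨hS, by simpa [Nat.lt_succ_iff] using Finset.card_lt_univ_of_notMem h0⟩

end PermPath

section StarGraph

variable {k : ℕ}

theorem starGraph_adj {n : ℕ} {a b : Fin n} :
    (starGraph n).Adj a b ↔ a ≠ b ∧ ((a : ℕ) = 0 ∨ (b : ℕ) = 0) := by
  simp [starGraph]

theorem starGraph_adj_zero_left {a : Fin (k + 1)} : (starGraph (k + 1)).Adj 0 a ↔ a ≠ 0 := by
  simp [starGraph_adj, eq_comm]

theorem IsTube.eq_singleton_of_zero_notMem {t : Finset (Fin (k + 1))}
    (ht : IsTube (starGraph (k + 1)) t) (h0 : 0 ∉ t) : ∃ v, v ≠ 0 ∧ t = {v} := by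
  obtain ⟨v, hv⟩ := ht.1
  refine ⟨v, ne_of_mem_of_not_mem hv h0, ?_⟩
  by_contra hne
  obtain ⟨y, hy, z, hz, hyz⟩ := exists_adj_of_connected_induce (u := {v}) ht.2.2 ⟨v, hv, rfl⟩
    (by grind)
  have hy0 : y ≠ 0 := ne_of_mem_of_not_mem hy.1 h0
  have hz0 : z ≠ 0 := ne_of_mem_of_not_mem hz.1 h0
  obtain ⟨-, h | h⟩ := starGraph_adj.1 hyz
  exacts [hy0 (Fin.ext h), hz0 (Fin.ext h)]

theorem IsTube.mem_sublevelTubing_starGraph_iff {t : Finset (Fin (k + 1))}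
    (ht : IsTube (starGraph (k + 1)) t) (h0 : 0 ∈ t) {σ : Equiv.Perm (Fin (k + 1))} :
    t ∈ sublevelTubing (starGraph (k + 1)) σ ↔ IsInitialSegment σ t := by
  rw [mem_sublevelTubing, isInitialSegment_iff_forall_lt, and_iff_right ht]
  exact ⟨fun h x hx z hz => h x hx 0 h0 z hz
      (starGraph_adj_zero_left.2 (ne_of_mem_of_not_mem h0 hz).symm),
    fun h x hx _ _ z hz _ => h x hx z hz⟩

theorem IsTube.singleton_mem_sublevelTubing_starGraph_iff {α : Type*} [LT α] {v : Fin (k + 1)}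
    (ht : IsTube (starGraph (k + 1)) {v}) (hv : v ≠ 0) {r : Fin (k + 1) → α} :
    {v} ∈ sublevelTubing (starGraph (k + 1)) r ↔ r v < r 0 := by
  have hadj (z : Fin (k + 1)) : (starGraph (k + 1)).Adj v z ↔ z = 0 := by
    rw [starGraph_adj]
    grind
  simp only [mem_sublevelTubing, ht, hadj, true_and, Finset.mem_singleton, forall_eq]
  exact ⟨fun h => h 0 hv.symm rfl, by rintro h _ - rfl; exact h⟩

theorem card_sublevelTubing_starGraph_sdiff_swap {σ : Equiv.Perm (Fin (k + 1))}
    {i j : Fin (k + 1)} (hij : i ⋖ j) (h0 : σ 0 ≤ j) :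
    (sublevelTubing (starGraph (k + 1)) σ \
        sublevelTubing (starGraph (k + 1)) (Equiv.swap i j * σ)).card = 1 ∧
      (sublevelTubing (starGraph (k + 1)) (Equiv.swap i j * σ) \
        sublevelTubing (starGraph (k + 1)) σ).card = 1 := by
  obtain ⟨a, ha⟩ := σ.surjective i
  obtain ⟨b, hb⟩ := σ.surjective j
  refine card_sublevelTubing_sdiff_swap σ.injective hij ?_
  rcases h0.eq_or_lt with h0 | h0
  · obtain rfl : 0 = b := σ.injective (h0.trans hb.symm)
    have ha0 : a ≠ 0 := by
      rintro rfl
      exact hij.lt.ne (ha.symm.trans hb)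
    exact sublevelTubing_ne_swap hij.lt ha hb ha.le (.inl rfl) (starGraph_adj_zero_left.2 ha0).symm
  · have hb0 : b ≠ 0 := by
      rintro rfl
      exact h0.ne hb
    refine sublevelTubing_ne_swap hij.lt ha hb (hij.le_of_lt h0) ?_ (starGraph_adj_zero_left.2 hb0)
    exact (eq_or_ne 0 a).imp_right fun ha0 => (starGraph_adj_zero_left.2 ha0.symm).symm

/-- The path of tubings of the star: the last two stages of `permPath (k + 1)`, with the center as
the new letter. -/
noncomputable def starPath (k t : ℕ) : Finset (Finset (Fin (k + 1))) :=
  sublevelTubing (starGraph (k + 1)) (permPath (k + 1) (permPathLength k + t))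

theorem card_starPath_sdiff_add_one {t : ℕ} (ht : t < permPathLength k + k) :
    (starPath k t \ starPath k (t + 1)).card = 1 ∧
      (starPath k (t + 1) \ starPath k t).card = 1 := by
  obtain ⟨i, j, hij, h0, hswap⟩ : ∃ i j, i ⋖ j ∧
      permPath (k + 1) (permPathLength k + t) 0 ≤ j ∧
      permPath (k + 1) (permPathLength k + t + 1) =
        Equiv.swap i j * permPath (k + 1) (permPathLength k + t) := by
    rcases lt_or_ge t k with hk | hk
    · obtain ⟨i, hij, hswap⟩ := exists_covBy_permPath_succ_of_length_le
        (Nat.le_add_right (permPathLength k) t) (by omega)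
      exact ⟨i, _, hij, le_rfl, hswap⟩
    · obtain ⟨i, j, hij, hswap⟩ := exists_covBy_permPath_add_one (k := k + 1)
        (t := permPathLength k + t) (by rw [permPathLength]; omega)
      refine ⟨i, j, hij, ?_, hswap⟩
      rw [Fin.le_def, permPath_succ_zero_val]
      omega
  rw [starPath, starPath, ← add_assoc, hswap]
  exact card_sublevelTubing_starGraph_sdiff_swap hij h0

theorem singleton_succ_mem_starPath_iff {x : Fin k} (ht : IsTube (starGraph (k + 1)) {x.succ})
    {t : ℕ} : {x.succ} ∈ starPath k t ↔ t < k - (permPath k (permPathLength k) x : ℕ) := by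
  rw [starPath, ht.singleton_mem_sublevelTubing_starGraph_iff x.succ_ne_zero]
  rcases le_or_gt t k with htk | htk
  · rw [permPath_succ_length_add htk, permCons_zero, permCons_succ,
      Fin.succAbove_lt_iff_castSucc_lt]
    exact lt_tsub_comm (α := ℕ)
  · rw [Fin.lt_def, permPath_succ_zero_val]
    omega

theorem mem_starPath_iff_of_zero_mem {S : Finset (Fin (k + 1))}
    (hS : IsTube (starGraph (k + 1)) S) (h0 : 0 ∈ S) {t : ℕ} :
    S ∈ starPath k t ↔ IsInitialSegment (permPath (k + 1) (permPathLength k + t)) S :=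
  hS.mem_sublevelTubing_starGraph_iff h0

theorem ordConnected_setOf_mem_starPath {S : Finset (Fin (k + 1))}
    (hS : IsTube (starGraph (k + 1)) S) : {t | S ∈ starPath k t}.OrdConnected := by
  by_cases h0 : 0 ∈ S
  · simp only [mem_starPath_iff_of_zero_mem hS h0]
    exact (ordConnected_setOf_isInitialSegment_permPath S).preimage_mono
      (add_right_mono (a := permPathLength k))
  · obtain ⟨v, hv, rfl⟩ := hS.eq_singleton_of_zero_notMem h0
    obtain ⟨x, rfl⟩ := Fin.exists_succ_eq.2 hv
    simp only [singleton_succ_mem_starPath_iff hS]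
    exact Set.ordConnected_Iio

theorem exists_mem_starPath {S : Finset (Fin (k + 1))} (hS : IsTube (starGraph (k + 1)) S) :
    ∃ t < permPathLength k + k + 1, S ∈ starPath k t := by
  by_cases h0 : 0 ∈ S
  · obtain ⟨t, ht, hSt⟩ := exists_isInitialSegment_permPath S
    have hlt := ((isInitialSegment_permPath_succ_of_zero_mem h0 hS.2.1).1 hSt).2
    have hcard := S.card_lt_iff_ne_univ.2 hS.2.1
    rw [Fintype.card_fin] at hcard
    obtain ⟨m, rfl⟩ := Nat.exists_eq_add_of_le (show permPathLength k ≤ t by omega)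
    rw [permPathLength] at ht
    exact ⟨m, by omega, (mem_starPath_iff_of_zero_mem hS h0).2 hSt⟩
  · obtain ⟨v, hv, rfl⟩ := hS.eq_singleton_of_zero_notMem h0
    obtain ⟨x, rfl⟩ := Fin.exists_succ_eq.2 hv
    exact ⟨0, by omega, (singleton_succ_mem_starPath_iff hS).2 (by omega)⟩

end StarGraph

/-- The stellohedron has a facet-Hamiltonian path: for `n ≥ 2` there is a sequence of
maximal tubings of the star `S_n`, consecutive ones differing by exchanging exactly one
tube, such that every tube of `S_n` appears in the tubings of exactly one nonempty
contiguous interval of the sequence. -/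
theorem stellohedron_facet_hamiltonian_path (n : ℕ) (hn : 2 ≤ n) :
    ∃ (m : ℕ) (T : Fin m → Finset (Finset (Fin n))),
      1 ≤ m ∧
      (∀ j, IsMaxTubing (starGraph n) (T j)) ∧
      (∀ (j : Fin m) (hj : (j : ℕ) + 1 < m),
        ((T j) \ (T ⟨(j : ℕ) + 1, hj⟩)).card = 1 ∧
        ((T ⟨(j : ℕ) + 1, hj⟩) \ (T j)).card = 1) ∧
      (∀ t : Finset (Fin n), IsTube (starGraph n) t →
        ∃ a b : ℕ, a ≤ b ∧ b < m ∧
          ∀ j : Fin m, t ∈ T j ↔ (a ≤ (j : ℕ) ∧ (j : ℕ) ≤ b)) := by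
  obtain ⟨k, rfl⟩ : ∃ k, n = k + 1 := ⟨n - 1, by omega⟩
  refine ⟨permPathLength k + k + 1, fun j => starPath k j, by omega,
    fun j => isMaxTubing_sublevelTubing _ (Equiv.injective _),
    fun j hj => card_starPath_sdiff_add_one (by omega), fun S hS => ?_⟩
  obtain ⟨a, b, hab, hb, hmem⟩ :=
    exists_Icc_of_ordConnected (ordConnected_setOf_mem_starPath hS) (exists_mem_starPath hS)
  exact ⟨a, b, hab, hb, fun j => hmem j j.isLt⟩
end
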